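/- Let (X_n : n ≥ 0) be a Markov chain on a finite state space S with transition matrices (P_n : n ≥ 0). Suppose P_n(s,t) → P(s,t) as n → ∞ for all s,t ∈ S, where P is an irreducible and aperiodic stochastic matrix with stationary distribution π. Then almost surely, for every t₀ ∈ S, (1/N) Σ_{n=0}^{N−1} 1_{{X_n = t₀}} → π(t₀) as N → ∞, and for all s₀, t₀ ∈ S, (1/N) Σ_{n=0}^{N−1} 1_{{(X_n, X_{n+1}) = (s₀, t₀)}} → π(s₀)P(s₀, t₀) as N → ∞. -/

import Mathlib

/-! For each pair `(s, t)` the deviations `1{X n = s} (1{X (n+1) = t} - P n s t)` are, by the Markov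
property, orthogonal to every function of the past, so Rajchman's strong law for orthogonal
variables makes their averages vanish almost surely. On such a trajectory the frequency of the
transition `(s, t)` is `μ N s * Plim s t + o(1)`, where `μ N` is the empirical distribution of the
states. Summing over `s`, `μ N` is asymptotically `Plim`-invariant. The probability simplex is
compact and each limit point of `μ N` is a stationary distribution of `Plim`; when there is only
one, `μ N` converges to it. Uniqueness for irreducible `Plim` is Perron's argument: if `v` and
`w > 0` are invariant and `c = min v / w`, then `v - c w` is nonnegative, invariant and has a zero,
hence vanishes. -/

open MeasureTheory Filter Topology

namespace MarkovChainLLN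

/-- A stochastic matrix over the finite state space `S`. -/
def IsStochastic {S : Type*} [Fintype S] (P : S → S → ℝ) : Prop :=
  (∀ s t, 0 ≤ P s t) ∧ ∀ s, ∑ t, P s t = 1

/-- `(Xc n)` is a (possibly non-homogeneous) one-sided Markov chain on the finite
state space `S`, with transition matrices `(P n)`, defined on the probability
space `(Ω, ℙ)`: this is the cylinder form of the Markov property
`ℙ(X_{n+1} = t ∣ X_n = s, …, X_0 = s_0) = P_n(s, t)`. -/
def IsMarkovChain {S : Type*} [Fintype S] {Ω : Type*} [MeasurableSpace Ω]
    (ℙ : Measure Ω) (Xc : ℕ → Ω → S) (P : ℕ → S → S → ℝ) : Prop :=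
  ∀ (n : ℕ) (w : ℕ → S),
    ℙ {ω | ∀ i ≤ n + 1, Xc i ω = w i}
      = ℙ {ω | ∀ i ≤ n, Xc i ω = w i} * ENNReal.ofReal (P n (w n) (w (n + 1)))

end MarkovChainLLN
namespace MarkovChainLLN

/-- Matrix multiplication for `S × S` matrices given as functions. -/
noncomputable def matMul {S : Type*} [Fintype S] (P Q : S → S → ℝ) : S → S → ℝ :=
  fun s t => ∑ u, P s u * Q u t

/-- Matrix powers. -/
noncomputable def matPow {S : Type*} [Fintype S] [DecidableEq S]
    (P : S → S → ℝ) : ℕ → S → S → ℝ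
  | 0 => fun s t => if s = t then 1 else 0
  | k + 1 => matMul (matPow P k) P

open scoped Matrix

/-! ### Rajchman's strong law -/

section StrongLaw

variable {Ω : Type*} {mΩ : MeasurableSpace Ω} {μ : Measure Ω}

lemma ae_tendsto_zero_of_summable_integral_sq {f : ℕ → Ω → ℝ} (hf : ∀ n, MemLp (f n) 2 μ)
    (hsum : Summable fun n => ∫ ω, f n ω ^ 2 ∂μ) :
    ∀ᵐ ω ∂μ, Tendsto (fun n => f n ω) atTop (𝓝 0) := by
  have hnorm (n : ℕ) : eLpNorm (fun ω => f n ω ^ 2) 1 μ = ENNReal.ofReal (∫ ω, f n ω ^ 2 ∂μ) := by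
    rw [eLpNorm_one_eq_lintegral_enorm,
      ← ofReal_integral_norm_eq_lintegral_enorm (hf n).integrable_sq]
    simp only [norm_pow, Real.norm_eq_abs, sq_abs]
  have hsummable : ∀ᵐ ω ∂μ, Summable fun n => ‖f n ω ^ 2‖ := by
    refine summable_norm_of_tsum_eLpNorm_ne_top le_rfl
      (fun n => (hf n).integrable_sq.aestronglyMeasurable) ?_
    simpa only [hnorm] using hsum.tsum_ofReal_ne_top
  filter_upwards [hsummable] with ω hω
  simpa [Real.sqrt_sq_eq_abs, tendsto_zero_iff_abs_tendsto_zero, Function.comp_def]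
    using hω.tendsto_atTop_zero.sqrt

lemma ae_tendsto_inv_sq_mul_of_integral_sq_le {g : ℕ → Ω → ℝ} (hg : ∀ m, MemLp (g m) 2 μ) {B : ℝ}
    (hB : ∀ m : ℕ, m ≠ 0 → ∫ ω, g m ω ^ 2 ∂μ ≤ B * (m : ℝ) ^ 2) :
    ∀ᵐ ω ∂μ, Tendsto (fun m : ℕ => ((m : ℝ) ^ 2)⁻¹ * g m ω) atTop (𝓝 0) := by
  refine ae_tendsto_zero_of_summable_integral_sq (fun m => (hg m).const_mul _) ?_
  refine Summable.of_nonneg_of_le (fun m => integral_nonneg fun ω => sq_nonneg _) (fun m => ?_)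
    ((Real.summable_one_div_nat_pow.2 one_lt_two).mul_left B)
  simp only [mul_pow, integral_const_mul]
  rcases eq_or_ne m 0 with rfl | hm
  · simp
  calc (((m : ℝ) ^ 2)⁻¹) ^ 2 * ∫ ω, g m ω ^ 2 ∂μ
      ≤ (((m : ℝ) ^ 2)⁻¹) ^ 2 * (B * (m : ℝ) ^ 2) := by gcongr; exact hB m hm
    _ = B * (1 / (m : ℝ) ^ 2) := by field_simp

lemma integral_sum_sq_of_pairwise_orthogonal {ι : Type*} {D : ι → Ω → ℝ}
    (hD : ∀ i, MemLp (D i) 2 μ) (horth : Pairwise fun i j => ∫ ω, D i ω * D j ω ∂μ = 0)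
    (s : Finset ι) :
    ∫ ω, (∑ i ∈ s, D i ω) ^ 2 ∂μ = ∑ i ∈ s, ∫ ω, D i ω ^ 2 ∂μ := by
  have hintegrable (i j : ι) : Integrable (fun ω => D i ω * D j ω) μ := (hD i).integrable_mul (hD j)
  simp only [sq, Finset.sum_mul_sum]
  rw [integral_finsetSum _ fun i _ => integrable_finsetSum _ fun j _ => hintegrable i j]
  refine Finset.sum_congr rfl fun i hi => ?_
  rw [integral_finsetSum _ fun j _ => hintegrable i j]
  exact Finset.sum_eq_single_of_mem i hi fun j _ hji => horth hji.symm

lemma integral_sum_abs_sq_le {ι : Type*} {D : ι → Ω → ℝ} (hD : ∀ i, MemLp (D i) 2 μ) {C : ℝ}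
    (hC : ∀ i, ∫ ω, D i ω ^ 2 ∂μ ≤ C) (s : Finset ι) :
    ∫ ω, (∑ i ∈ s, |D i ω|) ^ 2 ∂μ ≤ C * (s.card : ℝ) ^ 2 := by
  calc ∫ ω, (∑ i ∈ s, |D i ω|) ^ 2 ∂μ
      ≤ ∫ ω, s.card * ∑ i ∈ s, D i ω ^ 2 ∂μ := by
        refine integral_mono (memLp_finsetSum s fun i _ => (hD i).abs).integrable_sq
          ((integrable_finsetSum s fun i _ => (hD i).integrable_sq).const_mul _) fun ω => ?_
        simpa only [sq_abs] using sq_sum_le_card_mul_sum_sq (s := s) (f := fun i => |D i ω|)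
    _ = s.card * ∑ i ∈ s, ∫ ω, D i ω ^ 2 ∂μ := by
        rw [integral_const_mul, integral_finsetSum _ fun i _ => (hD i).integrable_sq]
    _ ≤ s.card * (s.card * C) := by
        gcongr
        simpa using Finset.sum_le_card_nsmul s _ C fun i _ => hC i
    _ = C * (s.card : ℝ) ^ 2 := by ring

lemma tendsto_average_of_tendsto_average_sq {a : ℕ → ℝ}
    (hsq : Tendsto (fun m : ℕ => ((m : ℝ) ^ 2)⁻¹ * ∑ n ∈ Finset.range (m ^ 2), a n) atTop (𝓝 0))
    (hgap : Tendsto (fun m : ℕ => ((m : ℝ) ^ 2)⁻¹ * ∑ n ∈ Finset.Ico (m ^ 2) ((m + 1) ^ 2), |a n|)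
      atTop (𝓝 0)) :
    Tendsto (fun N : ℕ => (N : ℝ)⁻¹ * ∑ n ∈ Finset.range N, a n) atTop (𝓝 0) := by
  have hsqrt : Tendsto Nat.sqrt atTop atTop :=
    tendsto_atTop.2 fun b => (eventually_ge_atTop (b * b)).mono fun _ => Nat.le_sqrt.2
  refine squeeze_zero_norm' ?_ (by simpa using (hsq.abs.add hgap).comp hsqrt)
  filter_upwards [eventually_ge_atTop 1] with N hN
  set m := Nat.sqrt N
  have hm : 0 < (m : ℝ) := Nat.cast_pos.2 (Nat.sqrt_pos.2 hN)
  have hle : m ^ 2 ≤ N := Nat.sqrt_le' N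
  have hlt : N ≤ (m + 1) ^ 2 := (Nat.lt_succ_sqrt' N).le
  have hbound : |∑ n ∈ Finset.range N, a n| ≤
      |∑ n ∈ Finset.range (m ^ 2), a n| + ∑ n ∈ Finset.Ico (m ^ 2) ((m + 1) ^ 2), |a n| := by
    rw [← Finset.sum_range_add_sum_Ico a hle]
    refine (abs_add_le _ _).trans (add_le_add_right ((Finset.abs_sum_le_sum_abs _ _).trans ?_) _)
    exact Finset.sum_le_sum_of_subset_of_nonneg (Finset.Ico_subset_Ico_right hlt)
      fun _ _ _ => abs_nonneg _
  have hinv : (N : ℝ)⁻¹ ≤ ((m : ℝ) ^ 2)⁻¹ := inv_anti₀ (pow_pos hm 2) (by exact_mod_cast hle)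
  calc ‖(N : ℝ)⁻¹ * ∑ n ∈ Finset.range N, a n‖
      = (N : ℝ)⁻¹ * |∑ n ∈ Finset.range N, a n| := by simp
    _ ≤ ((m : ℝ) ^ 2)⁻¹ * (|∑ n ∈ Finset.range (m ^ 2), a n| +
          ∑ n ∈ Finset.Ico (m ^ 2) ((m + 1) ^ 2), |a n|) := by gcongr
    _ = _ := by simp [mul_add, m]

/-- Orthogonality makes the second moments summable along the squares; the gaps between
consecutive squares are short enough for the Cauchy–Schwarz inequality alone. -/
theorem ae_tendsto_average_of_pairwise_orthogonal {D : ℕ → Ω → ℝ} (hD : ∀ n, MemLp (D n) 2 μ)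
    {C : ℝ} (hC : ∀ n, ∫ ω, D n ω ^ 2 ∂μ ≤ C)
    (horth : Pairwise fun i j => ∫ ω, D i ω * D j ω ∂μ = 0) :
    ∀ᵐ ω ∂μ, Tendsto (fun N : ℕ => (N : ℝ)⁻¹ * ∑ n ∈ Finset.range N, D n ω) atTop (𝓝 0) := by
  have hC0 : 0 ≤ C := (integral_nonneg fun ω => sq_nonneg (D 0 ω)).trans (hC 0)
  have hsq : ∀ᵐ ω ∂μ, Tendsto
      (fun m : ℕ => ((m : ℝ) ^ 2)⁻¹ * ∑ n ∈ Finset.range (m ^ 2), D n ω) atTop (𝓝 0) := by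
    refine ae_tendsto_inv_sq_mul_of_integral_sq_le (B := C)
      (fun m => memLp_finsetSum _ fun n _ => hD n) fun m _ => ?_
    rw [integral_sum_sq_of_pairwise_orthogonal hD horth]
    calc ∑ n ∈ Finset.range (m ^ 2), ∫ ω, D n ω ^ 2 ∂μ ≤ ∑ _n ∈ Finset.range (m ^ 2), C :=
          Finset.sum_le_sum fun n _ => hC n
      _ = C * (m : ℝ) ^ 2 := by simp [mul_comm]
  have hgap : ∀ᵐ ω ∂μ, Tendsto (fun m : ℕ =>
      ((m : ℝ) ^ 2)⁻¹ * ∑ n ∈ Finset.Ico (m ^ 2) ((m + 1) ^ 2), |D n ω|) atTop (𝓝 0) := by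
    refine ae_tendsto_inv_sq_mul_of_integral_sq_le (B := C * 3 ^ 2)
      (fun m => memLp_finsetSum _ fun n _ => (hD n).abs) fun m hm => ?_
    have hcard : (Finset.Ico (m ^ 2) ((m + 1) ^ 2)).card ≤ 3 * m := by
      rw [Nat.card_Ico, Nat.sub_le_iff_le_add]
      nlinarith [Nat.pos_of_ne_zero hm]
    calc ∫ ω, (∑ n ∈ Finset.Ico (m ^ 2) ((m + 1) ^ 2), |D n ω|) ^ 2 ∂μ
        ≤ C * ((Finset.Ico (m ^ 2) ((m + 1) ^ 2)).card : ℝ) ^ 2 := integral_sum_abs_sq_le hD hC _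
      _ ≤ C * (3 * m) ^ 2 := by gcongr; exact_mod_cast hcard
      _ = C * 3 ^ 2 * (m : ℝ) ^ 2 := by ring
  filter_upwards [hsq, hgap] with ω using tendsto_average_of_tendsto_average_sq

end StrongLaw

/-! ### Deviations of the transition counts -/

section Deviation

lemma IsStochastic.apply_le_one {S : Type*} [Fintype S] {P : S → S → ℝ} (hP : IsStochastic P)
    (s t : S) : P s t ≤ 1 :=
  (Finset.single_le_sum (fun u _ => hP.1 s u) (Finset.mem_univ t)).trans_eq (hP.2 s)

/-- The indicator of a transition `s → t` of the trajectory `x` at time `n`, minus the conditional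
probability `P n s t` of that transition on the event `x n = s`. -/
noncomputable def transitionDeviation {S : Type*} [DecidableEq S] (P : ℕ → S → S → ℝ) (s t : S)
    (x : ℕ → S) (n : ℕ) : ℝ :=
  if x n = s then (if x (n + 1) = t then 1 else 0) - P n s t else 0

lemma integral_comp_mul_eq_zero_of_setIntegral_fiber {Ω ι : Type*} {mΩ : MeasurableSpace Ω}
    {μ : Measure Ω} [Finite ι] [MeasurableSpace ι] [MeasurableSingletonClass ι] {Y : Ω → ι}
    (hY : Measurable Y) {f : Ω → ℝ} (hf : Integrable f μ)
    (hfiber : ∀ y, ∫ ω in Y ⁻¹' {y}, f ω ∂μ = 0) (h : ι → ℝ) :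
    ∫ ω, h (Y ω) * f ω ∂μ = 0 := by
  have := Fintype.ofFinite ι
  have hmeas (y : ι) : MeasurableSet (Y ⁻¹' {y}) := hY (measurableSet_singleton y)
  have hcongr (y : ι) : Set.EqOn (fun ω => h (Y ω) * f ω) (fun ω => h y * f ω) (Y ⁻¹' {y}) := by
    rintro ω rfl
    rfl
  calc ∫ ω, h (Y ω) * f ω ∂μ
      = ∫ ω in ⋃ y, Y ⁻¹' {y}, h (Y ω) * f ω ∂μ := by
        rw [← Set.preimage_iUnion, Set.iUnion_of_singleton, Set.preimage_univ, setIntegral_univ]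
    _ = ∑ y, ∫ ω in Y ⁻¹' {y}, h (Y ω) * f ω ∂μ :=
        integral_iUnion_fintype hmeas (pairwise_disjoint_fiber Y) fun y =>
          ((hf.const_mul (h y)).integrableOn).congr_fun (hcongr y).symm (hmeas y)
    _ = 0 := Finset.sum_eq_zero fun y _ => by
        rw [setIntegral_congr_fun (hmeas y) (hcongr y), integral_const_mul, hfiber, mul_zero]

lemma measurable_transitionDeviation {S Ω : Type*} [Countable S] [DecidableEq S]
    [MeasurableSpace S] [MeasurableSingletonClass S] [MeasurableSpace Ω] {X : ℕ → Ω → S}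
    (hX : ∀ n, Measurable (X n)) (P : ℕ → S → S → ℝ) (s t : S) (n : ℕ) :
    Measurable fun ω => transitionDeviation P s t (fun k => X k ω) n :=
  (measurable_of_countable fun p : S × S =>
    if p.1 = s then (if p.2 = t then (1 : ℝ) else 0) - P n s t else 0).comp
    ((hX n).prodMk (hX (n + 1)))

variable {S : Type*} [Fintype S] {Ω : Type*} [MeasurableSpace Ω] {ℙ : Measure Ω}
  {X : ℕ → Ω → S} {P : ℕ → S → S → ℝ}

lemma IsMarkovChain.measureReal_cylinder_inter (hchain : IsMarkovChain ℙ X P)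
    (hP : ∀ n s t, 0 ≤ P n s t) (n : ℕ) (w : ℕ → S) (t : S) :
    ℙ.real ({ω | ∀ i ≤ n, X i ω = w i} ∩ {ω | X (n + 1) ω = t}) =
      ℙ.real {ω | ∀ i ≤ n, X i ω = w i} * P n (w n) t := by
  have hagree : ∀ i ≤ n, Function.update w (n + 1) t i = w i := fun i hi =>
    Function.update_of_ne (by lia) _ _
  have hpast : {ω | ∀ i ≤ n, X i ω = Function.update w (n + 1) t i} =
      {ω | ∀ i ≤ n, X i ω = w i} := by
    ext ω
    exact forall₂_congr fun i hi => by rw [hagree i hi]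
  have hcylinder : {ω | ∀ i ≤ n + 1, X i ω = Function.update w (n + 1) t i} =
      {ω | ∀ i ≤ n, X i ω = w i} ∩ {ω | X (n + 1) ω = t} := by
    rw [← hpast]
    ext ω
    simp [Nat.le_succ_iff, or_imp, forall_and]
  have := hchain n (Function.update w (n + 1) t)
  rw [hcylinder, hpast, hagree n le_rfl, Function.update_self] at this
  simp only [Measure.real, this, ENNReal.toReal_mul, ENNReal.toReal_ofReal (hP n (w n) t)]

variable [DecidableEq S]

lemma abs_transitionDeviation_le_one (hP : ∀ n, IsStochastic (P n)) (s t : S) (x : ℕ → S) (n : ℕ) :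
    |transitionDeviation P s t x n| ≤ 1 := by
  have h0 := (hP n).1 s t
  have h1 := (hP n).apply_le_one s t
  unfold transitionDeviation
  rw [abs_le]
  split_ifs <;> constructor <;> linarith

variable [MeasurableSpace S] [MeasurableSingletonClass S] [IsFiniteMeasure ℙ]

lemma memLp_transitionDeviation (hX : ∀ n, Measurable (X n)) (hP : ∀ n, IsStochastic (P n))
    (s t : S) (n : ℕ) (p : ENNReal) :
    MemLp (fun ω => transitionDeviation P s t (fun k => X k ω) n) p ℙ :=
  MemLp.of_bound (measurable_transitionDeviation hX P s t n).aestronglyMeasurable 1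
    (ae_of_all _ fun _ => abs_transitionDeviation_le_one hP s t _ n)

lemma IsMarkovChain.setIntegral_cylinder_transitionDeviation (hchain : IsMarkovChain ℙ X P)
    (hX : ∀ n, Measurable (X n)) (hP : ∀ n s t, 0 ≤ P n s t) (s t : S) (n : ℕ) (w : ℕ → S) :
    ∫ ω in {ω | ∀ i ≤ n, X i ω = w i}, transitionDeviation P s t (fun k => X k ω) n ∂ℙ = 0 := by
  set A := {ω | ∀ i ≤ n, X i ω = w i}
  have hA : MeasurableSet A := by measurability
  by_cases hw : w n = s
  · subst hw
    have hB : MeasurableSet {ω | X (n + 1) ω = t} := hX _ (measurableSet_singleton t)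
    have hdev : Set.EqOn (fun ω => transitionDeviation P (w n) t (fun k => X k ω) n)
        (fun ω => {ω | X (n + 1) ω = t}.indicator 1 ω - P n (w n) t) A := fun ω hω => by
      simp [transitionDeviation, hω n le_rfl, Set.indicator_apply]
    have hintegrable : Integrable ({ω | X (n + 1) ω = t}.indicator (1 : Ω → ℝ)) (ℙ.restrict A) :=
      (integrable_const (1 : ℝ)).indicator hB
    rw [setIntegral_congr_fun hA hdev, integral_sub hintegrable (integrable_const _),
      integral_indicator_one hB, measureReal_restrict_apply hB, Set.inter_comm,
      hchain.measureReal_cylinder_inter hP, setIntegral_const, smul_eq_mul, sub_self]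
  · refine setIntegral_eq_zero_of_forall_eq_zero fun ω hω => ?_
    simp [transitionDeviation, hω n le_rfl, hw]

lemma IsMarkovChain.integral_history_mul_transitionDeviation (hchain : IsMarkovChain ℙ X P)
    (hX : ∀ n, Measurable (X n)) (hP : ∀ n, IsStochastic (P n)) (s t : S) (n : ℕ)
    (h : (Set.Iic n → S) → ℝ) :
    ∫ ω, h (fun i => X i ω) * transitionDeviation P s t (fun k => X k ω) n ∂ℙ = 0 := by
  refine integral_comp_mul_eq_zero_of_setIntegral_fiber (Y := fun ω (i : Set.Iic n) => X i ω)
    (measurable_pi_lambda _ fun i => hX i)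
    (memLp_one_iff_integrable.1 (memLp_transitionDeviation hX hP s t n 1)) (fun y => ?_) h
  rcases Set.eq_empty_or_nonempty ((fun ω (i : Set.Iic n) => X i ω) ⁻¹' {y}) with hy | ⟨ω₀, rfl⟩
  · rw [hy, setIntegral_empty]
  · have hfiber : (fun ω (i : Set.Iic n) => X i ω) ⁻¹' {fun i : Set.Iic n => X i ω₀} =
        {ω | ∀ i ≤ n, X i ω = X i ω₀} := by
      ext ω
      simp [funext_iff]
    rw [hfiber]
    exact hchain.setIntegral_cylinder_transitionDeviation hX (fun n => (hP n).1) s t n _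

lemma IsMarkovChain.pairwise_orthogonal_transitionDeviation (hchain : IsMarkovChain ℙ X P)
    (hX : ∀ n, Measurable (X n)) (hP : ∀ n, IsStochastic (P n)) (s t : S) :
    Pairwise fun i j => ∫ ω, transitionDeviation P s t (fun k => X k ω) i *
      transitionDeviation P s t (fun k => X k ω) j ∂ℙ = 0 := by
  have hlt {i j : ℕ} (hij : i < j) : ∫ ω, transitionDeviation P s t (fun k => X k ω) i *
      transitionDeviation P s t (fun k => X k ω) j ∂ℙ = 0 :=
    hchain.integral_history_mul_transitionDeviation hX hP s t j fun y =>
      if y ⟨i, hij.le⟩ = s then (if y ⟨i + 1, hij⟩ = t then 1 else 0) - P i s t else 0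
  intro i j hij
  rcases hij.lt_or_gt with hij | hji
  · exact hlt hij
  · simpa only [mul_comm] using hlt hji

theorem IsMarkovChain.ae_tendsto_average_transitionDeviation (hchain : IsMarkovChain ℙ X P)
    (hX : ∀ n, Measurable (X n)) (hP : ∀ n, IsStochastic (P n)) (s t : S) :
    ∀ᵐ ω ∂ℙ, Tendsto (fun N : ℕ =>
        (N : ℝ)⁻¹ * ∑ n ∈ Finset.range N, transitionDeviation P s t (fun k => X k ω) n)
      atTop (𝓝 0) := by
  refine ae_tendsto_average_of_pairwise_orthogonal (C := ℙ.real Set.univ)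
    (fun n => memLp_transitionDeviation hX hP s t n 2) (fun n => ?_)
    (hchain.pairwise_orthogonal_transitionDeviation hX hP s t)
  calc ∫ ω, transitionDeviation P s t (fun k => X k ω) n ^ 2 ∂ℙ
      ≤ ∫ _, (1 : ℝ) ∂ℙ := integral_mono (memLp_transitionDeviation hX hP s t n 2).integrable_sq
        (integrable_const 1) fun ω => (sq_le_one_iff_abs_le_one _).2
          (abs_transitionDeviation_le_one hP s t _ n)
    _ = ℙ.real Set.univ := by simp

end Deviation

/-! ### Stationary distributions -/

section Stationary

variable {S : Type*} [Fintype S]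

/-- `v` is a stationary distribution of `P`: a probability row vector fixed by `P`. No
stochasticity of `P` is built in. -/
def IsStationary (P : Matrix S S ℝ) (v : S → ℝ) : Prop :=
  v ∈ stdSimplex ℝ S ∧ v ᵥ* P = v

lemma tendsto_of_tendsto_vecMul_sub {ι : Type*} {l : Filter ι} {P : Matrix S S ℝ} {v : S → ℝ}
    (hunique : ∀ u, IsStationary P u → u = v) {μ : ι → S → ℝ}
    (hμ : ∀ᶠ i in l, μ i ∈ stdSimplex ℝ S)
    (hinv : Tendsto (fun i => μ i ᵥ* P - μ i) l (𝓝 0)) : Tendsto μ l (𝓝 v) := by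
  refine (isCompact_stdSimplex ℝ S).tendsto_nhds_of_unique_mapClusterPt hμ fun u hu hcluster =>
    hunique u ⟨hu, sub_eq_zero.1 ?_⟩
  have hcont : Continuous fun u : S → ℝ => u ᵥ* P - u := by fun_prop
  have hdefect : MapClusterPt (u ᵥ* P - u) l fun i => μ i ᵥ* P - μ i :=
    hcluster.continuousAt_comp hcont.continuousAt
  exact eq_of_nhds_neBot (hdefect.neBot.mono (inf_le_inf_left _ hinv))

lemma vecMul_pow_eq_self [DecidableEq S] {R : Type*} [Semiring R] {A : Matrix S S R} {v : S → R}
    (hv : v ᵥ* A = v) (k : ℕ) : v ᵥ* A ^ k = v := by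
  induction k with
  | zero => simp
  | succ k ih => rw [pow_succ, ← Matrix.vecMul_vecMul, ih, hv]

section Perron

variable {K : Type*} [Field K] [LinearOrder K] [IsStrictOrderedRing K]
  {A : Matrix S S K}

lemma pos_of_isIrreducible_of_vecMul_eq_self (hA : A.IsIrreducible) {v : S → K} (hv0 : 0 ≤ v)
    (hne : v ≠ 0) (hv : v ᵥ* A = v) (t : S) : 0 < v t := by
  classical
  obtain ⟨s, hs⟩ := Function.ne_iff.1 hne
  obtain ⟨k, -, hk⟩ := (Matrix.isIrreducible_iff_exists_pow_pos hA.nonneg).1 hA s t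
  calc 0 < v s * (A ^ k) s t := mul_pos ((hv0 s).lt_of_ne' hs) hk
    _ ≤ ∑ u, v u * (A ^ k) u t := Finset.single_le_sum
        (fun u _ => mul_nonneg (hv0 u) (Matrix.pow_apply_nonneg hA.nonneg k u t))
        (Finset.mem_univ s)
    _ = v t := congr_fun (vecMul_pow_eq_self hv k) t

lemma exists_eq_smul_of_vecMul_eq_self (hA : A.IsIrreducible) {v w : S → K} (hw0 : 0 ≤ w)
    (hne : w ≠ 0) (hw : w ᵥ* A = w) (hv : v ᵥ* A = v) : ∃ c : K, v = c • w := by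
  have hwpos := pos_of_isIrreducible_of_vecMul_eq_self hA hw0 hne hw
  obtain ⟨s₀, -⟩ := Function.ne_iff.1 hne
  have : Nonempty S := ⟨s₀⟩
  obtain ⟨s, hs⟩ := Finite.exists_min fun s => v s / w s
  set c := v s / w s
  refine ⟨c, sub_eq_zero.1 ?_⟩
  by_contra hdiff
  have hnonneg : 0 ≤ v - c • w := fun t => sub_nonneg.2 ((le_div_iff₀ (hwpos t)).1 (hs t))
  have hinv : (v - c • w) ᵥ* A = v - c • w := by
    rw [Matrix.sub_vecMul, Matrix.smul_vecMul, hv, hw]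
  have hzero : (v - c • w) s = 0 := by simp [c, div_mul_cancel₀ _ (hwpos s).ne']
  exact (pos_of_isIrreducible_of_vecMul_eq_self hA hnonneg hdiff hinv s).ne' hzero

end Perron

lemma IsStationary.ne_zero {P : Matrix S S ℝ} {v : S → ℝ} (hv : IsStationary P v) : v ≠ 0 := by
  rintro rfl
  simpa using hv.1.2

lemma IsStationary.setOf_eq_singleton {P : Matrix S S ℝ} {v : S → ℝ}
    (hv : IsStationary P v) (hP : P.IsIrreducible) : {u | IsStationary P u} = {v} := by
  refine Set.eq_singleton_iff_unique_mem.2 ⟨hv, fun u hu => ?_⟩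
  obtain ⟨c, rfl⟩ := exists_eq_smul_of_vecMul_eq_self hP hv.1.1 hv.ne_zero hv.2 hu.2
  have hc : c = 1 := by simpa [← Finset.mul_sum, hv.1.2] using hu.1.2
  rw [hc, one_smul]

lemma matPow_eq_pow [DecidableEq S] (P : S → S → ℝ) (k : ℕ) : matPow P k = Matrix.of P ^ k := by
  induction k with
  | zero =>
    ext s t
    simp [matPow, Matrix.one_apply]
  | succ k ih =>
    rw [pow_succ, ← ih]
    rfl

lemma IsStochastic.isPrimitive [DecidableEq S] {P : S → S → ℝ} (hP : IsStochastic P)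
    (hpos : ∃ k, ∀ s t, 0 < matPow P k s t) : (Matrix.of P).IsPrimitive := by
  obtain ⟨k, hk⟩ := hpos
  rw [matPow_eq_pow] at hk
  -- The exponent `k` may be `0` when `S` has at most one element, so it is raised by one.
  refine ⟨hP.1, k + 1, k.succ_pos, fun s t => ?_⟩
  obtain ⟨u, -, hu⟩ : ∃ u ∈ Finset.univ, 0 < P s u :=
    Finset.exists_lt_of_sum_lt (by simp [hP.2 s])
  rw [pow_succ', Matrix.mul_apply]
  exact Finset.sum_pos' (fun r _ => mul_nonneg (hP.1 s r) (hk r t).le)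
    ⟨u, Finset.mem_univ u, mul_pos hu (hk u t)⟩

end Stationary

/-! ### Empirical frequencies along a trajectory -/

section Frequency

variable {S : Type*} [DecidableEq S]

/-- The empirical distribution of the states `x 0, …, x (N - 1)`; it is `0` for `N = 0`. -/
noncomputable def stateFreq (x : ℕ → S) (N : ℕ) (s : S) : ℝ :=
  (N : ℝ)⁻¹ * ∑ n ∈ Finset.range N, if x n = s then 1 else 0

/-- The empirical frequency of the transition `s → t` among the first `N` transitions of `x`;
it is `0` for `N = 0`. -/
noncomputable def transitionFreq (x : ℕ → S) (N : ℕ) (s t : S) : ℝ :=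
  (N : ℝ)⁻¹ * ∑ n ∈ Finset.range N, if x n = s ∧ x (n + 1) = t then 1 else 0

lemma stateFreq_mem_stdSimplex [Fintype S] (x : ℕ → S) {N : ℕ} (hN : N ≠ 0) :
    stateFreq x N ∈ stdSimplex ℝ S := by
  refine ⟨fun s => by unfold stateFreq; positivity, ?_⟩
  simp only [stateFreq]
  rw [← Finset.mul_sum, Finset.sum_comm]
  simp [hN]

lemma tendsto_sum_transitionFreq_sub_stateFreq [Fintype S] (x : ℕ → S) (t : S) :
    Tendsto (fun N => ∑ s, transitionFreq x N s t - stateFreq x N t) atTop (𝓝 0) := by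
  have htelescope (N : ℕ) : ∑ s, transitionFreq x N s t - stateFreq x N t =
      (N : ℝ)⁻¹ * ((if x N = t then 1 else 0) - if x 0 = t then 1 else 0) := by
    simp only [transitionFreq, stateFreq]
    rw [← Finset.mul_sum, ← mul_sub, Finset.sum_comm, ← Finset.sum_sub_distrib,
      ← Finset.sum_range_sub (fun n => if x n = t then (1 : ℝ) else 0)]
    simp [ite_and]
  refine squeeze_zero_norm (fun N => ?_) (tendsto_inv_atTop_nhds_zero_nat (𝕜 := ℝ))
  rw [htelescope, norm_mul, Real.norm_of_nonneg (by positivity)]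
  refine mul_le_of_le_one_right (by positivity) ?_
  split_ifs <;> simp

lemma tendsto_transitionFreq_sub_stateFreq_mul {x : ℕ → S} {P : ℕ → S → S → ℝ} {s t : S} {p : ℝ}
    (hP : Tendsto (fun n => P n s t) atTop (𝓝 p))
    (hdev : Tendsto (fun N : ℕ => (N : ℝ)⁻¹ * ∑ n ∈ Finset.range N, transitionDeviation P s t x n)
      atTop (𝓝 0)) :
    Tendsto (fun N => transitionFreq x N s t - stateFreq x N s * p) atTop (𝓝 0) := by
  have hnull : Tendsto (fun n => if x n = s then P n s t - p else 0) atTop (𝓝 0) := by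
    refine squeeze_zero_norm (fun n => ?_) (tendsto_iff_norm_sub_tendsto_zero.1 hP)
    split_ifs <;> simp
  refine (add_zero (0 : ℝ) ▸ hdev.add hnull.cesaro).congr fun N => ?_
  simp only [transitionFreq, stateFreq]
  rw [mul_assoc, Finset.sum_mul, ← mul_add, ← mul_sub, ← Finset.sum_add_distrib,
    ← Finset.sum_sub_distrib]
  congr 1
  refine Finset.sum_congr rfl fun n _ => ?_
  by_cases h : x n = s <;> simp [transitionDeviation, h]

lemma tendsto_stateFreq [Fintype S] {x : ℕ → S} {P : Matrix S S ℝ} {v : S → ℝ}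
    (hunique : ∀ u, IsStationary P u → u = v)
    (hpair : ∀ s t, Tendsto (fun N => transitionFreq x N s t - stateFreq x N s * P s t)
      atTop (𝓝 0)) :
    Tendsto (stateFreq x) atTop (𝓝 v) := by
  refine tendsto_of_tendsto_vecMul_sub hunique
    ((eventually_ne_atTop 0).mono fun N => stateFreq_mem_stdSimplex x)
    (tendsto_pi_nhds.2 fun t => ?_)
  have := (tendsto_sum_transitionFreq_sub_stateFreq x t).sub
    (tendsto_finsetSum Finset.univ fun s _ => hpair s t)
  simp only [Finset.sum_const_zero, sub_zero] at this
  refine this.congr fun N => ?_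
  simp only [Finset.sum_sub_distrib, Pi.sub_apply, Matrix.vecMul, dotProduct]
  ring

end Frequency

theorem markov_lln_convergent_general
    {S : Type*} [Fintype S] [DecidableEq S] [MeasurableSpace S] [MeasurableSingletonClass S]
    {Ω : Type*} [MeasurableSpace Ω] (ℙ : Measure Ω) [IsFiniteMeasure ℙ]
    (X : ℕ → Ω → S) (hX : ∀ n, Measurable (X n))
    (P : ℕ → S → S → ℝ) (hP : ∀ n, IsStochastic (P n)) (hchain : IsMarkovChain ℙ X P)
    (Plim : Matrix S S ℝ) (hconv : ∀ s t, Tendsto (fun n => P n s t) atTop (𝓝 (Plim s t)))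
    (v : S → ℝ) (hv : {u | IsStationary Plim u} = {v}) :
    ∀ᵐ ω ∂ℙ,
      (∀ t, Tendsto (fun N => stateFreq (fun n => X n ω) N t) atTop (𝓝 (v t))) ∧
      ∀ s t, Tendsto (fun N => transitionFreq (fun n => X n ω) N s t) atTop
        (𝓝 (v s * Plim s t)) := by
  filter_upwards [ae_all_iff.2 fun s => ae_all_iff.2 fun t =>
    hchain.ae_tendsto_average_transitionDeviation hX hP s t] with ω hω
  have hpair s t := tendsto_transitionFreq_sub_stateFreq_mul (hconv s t) (hω s t)
  have hstate := tendsto_pi_nhds.1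
    (tendsto_stateFreq (Set.eq_singleton_iff_unique_mem.1 hv).2 hpair)
  exact ⟨hstate, fun s t => by simpa using (hpair s t).add ((hstate s).mul_const (Plim s t))⟩

/-- **Proposition (Wen–Weiguo).**
If the transition matrices `P_n` of a Markov chain converge to an irreducible and
aperiodic stochastic matrix `P` with stationary distribution `π`, then almost
surely the empirical frequencies of states converge to `π(t₀)` and the empirical
frequencies of transitions converge to `π(s₀)P(s₀,t₀)`. -/
theorem markov_lln_convergent
    {S : Type*} [Fintype S] [DecidableEq S] [MeasurableSpace S]
    [MeasurableSingletonClass S]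
    {Ω : Type*} [MeasurableSpace Ω]
    (ℙ : Measure Ω) [IsProbabilityMeasure ℙ]
    (Xc : ℕ → Ω → S) (hXmeas : ∀ n, Measurable (Xc n))
    (P : ℕ → S → S → ℝ) (hP : ∀ n, IsStochastic (P n))
    (hchain : IsMarkovChain ℙ Xc P)
    (Plim : S → S → ℝ) (hPlim : IsStochastic Plim)
    (hconv : ∀ s t : S, Tendsto (fun n => P n s t) atTop (𝓝 (Plim s t)))
    (hprim : ∃ k : ℕ, ∀ s t : S, 0 < matPow Plim k s t)
    (piv : S → ℝ) (hpiv_nonneg : ∀ s, 0 ≤ piv s) (hpiv_sum : ∑ s, piv s = 1)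
    (hstat : ∀ t : S, ∑ s, piv s * Plim s t = piv t) :
    ∀ᵐ ω ∂ℙ,
      (∀ t₀ : S, Tendsto (fun N : ℕ =>
          (N : ℝ)⁻¹ * ∑ n ∈ Finset.range N, (if Xc n ω = t₀ then (1 : ℝ) else 0))
        atTop (𝓝 (piv t₀))) ∧
      (∀ s₀ t₀ : S, Tendsto (fun N : ℕ =>
          (N : ℝ)⁻¹ * ∑ n ∈ Finset.range N,
            (if Xc n ω = s₀ ∧ Xc (n + 1) ω = t₀ then (1 : ℝ) else 0))
        atTop (𝓝 (piv s₀ * Plim s₀ t₀))) :=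
  markov_lln_convergent_general ℙ Xc hXmeas P hP hchain (Matrix.of Plim) hconv piv <|
    IsStationary.setOf_eq_singleton ⟨⟨hpiv_nonneg, hpiv_sum⟩, funext hstat⟩
      (hPlim.isPrimitive hprim).isIrreducible

end MarkovChainLLN
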